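/- Let T be a ℂ-linear triangulated category of finite type, G and G' two split-generators of T, and F a triangulated endofunctor of T with FⁿG ≇ 0 for all n ≥ 0. Then for every t ∈ ℝ, the entropy of F is given by h_t(F) = lim_{n→∞} (1/n) log δ_{T,t}(G, FⁿG'). -/

import Mathlib

/-!
The complexity satisfies `δ(G, X) ≤ δ(M, X) δ(G, M)` and `δ(F M, F X) ≤ δ(M, X)`. Hence
`c n = δ(G, Fⁿ G)` is submultiplicative, and `c' n = δ(G, Fⁿ G')` satisfies `c' n ≤ δ(G, G') c n`
and `c n ≤ δ(G', G) c' n`. By Fekete's lemma, `(1/n) log c n` and `(1/n) log c' n` then have the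
same limit.

The inequality `δ(G, X) ≤ δ(M, X) δ(G, M)` comes from replacing each step `M⟦n⟧` of a tower for `X`
by a shifted tower for `M`. This usually rests on the octahedral axiom, whereas a `Pretriangulated`
category need not satisfy it. All that is needed is that an extension `E` of `B` by `A`, where `B`
is an extension of `M` by `B'`, is an extension of `M` by an extension of `B'` by `A`. The homotopy
pullback `D` of `E` and `B'` over `B` is an extension of `B'` by `A`, and by the long exact
sequences the cones of the parallel sides `D ⟶ E` and `B' ⟶ B` have `Hom` spaces of the same
dimensions. In a category of finite type, these dimensions determine an object up to isomorphism,
so the cone of `D ⟶ E` is `M`.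
-/

open CategoryTheory Limits Pretriangulated Filter
open scoped ENNReal

universe u v u₂ v₂

namespace CatEntropy

section Defs

variable (C : Type u) [Category.{v} C] [Preadditive C] [HasZeroObject C]
  [HasShift C ℤ] [∀ n : ℤ, (shiftFunctor C n).Additive] [Pretriangulated C]

/-- `C` is of finite type: for all objects `M, N`, the total dimension
`Σ_{n ∈ ℤ} dim_ℂ Hom(M, N⟦n⟧)` is finite. -/
def IsFiniteType [Linear ℂ C] : Prop :=
  ∀ M N : C, {n : ℤ | ¬ Subsingleton (M ⟶ N⟦n⟧)}.Finite ∧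
    ∀ n : ℤ, FiniteDimensional ℂ (M ⟶ N⟦n⟧)

/-- A set of objects is a thick triangulated subcategory: closed under isomorphisms,
shifts, cones and direct summands. -/
structure IsThick (S : Set C) : Prop where
  mem_of_iso : ∀ {X Y : C}, (X ≅ Y) → X ∈ S → Y ∈ S
  shift_mem : ∀ (X : C) (n : ℤ), X ∈ S → X⟦n⟧ ∈ S
  cone_mem : ∀ (T : Triangle C), T ∈ (distTriang C) → T.obj₁ ∈ S → T.obj₂ ∈ S → T.obj₃ ∈ S
  summand_mem : ∀ (X Y : C), (X ⊞ Y) ∈ S → X ∈ S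

/-- `⟨M⟩`, the smallest thick triangulated subcategory containing `M`. -/
def thickClosure (M : C) : Set C :=
  ⋂₀ {S : Set C | IsThick C S ∧ M ∈ S}

/-- `G` is a split-generator of `C` if `⟨G⟩ = C`. -/
def IsSplitGenerator (G : C) : Prop := ∀ X : C, X ∈ thickClosure C G

open Classical in
/-- The complexity `δ_{C,t}(M, N)` of `N` with respect to `M`. -/
noncomputable def complexity (t : ℝ) (M N : C) : ℝ≥0∞ :=
  if IsZero N then 0
  else if N ∈ thickClosure C M then
    sInf {c : ℝ≥0∞ |
      ∃ (p : ℕ) (_ : 0 < p) (n : Fin p → ℤ) (A : Fin (p + 1) → C) (N' : C),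
        IsZero (A 0) ∧ Nonempty (A (Fin.last p) ≅ N ⊞ N') ∧
        (∀ i : Fin p,
          ∃ (f : A i.castSucc ⟶ A i.succ) (g : A i.succ ⟶ M⟦n i⟧)
            (h : M⟦n i⟧ ⟶ (A i.castSucc)⟦(1 : ℤ)⟧),
              Triangle.mk f g h ∈ (distTriang C)) ∧
        c = ∑ i : Fin p, ENNReal.ofReal (Real.exp ((n i : ℝ) * t))}
  else ⊤

/-- Iterated composition `Fⁿ` of an endofunctor. -/
def iter (F : C ⥤ C) : ℕ → C ⥤ C
  | 0 => 𝟭 C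
  | n + 1 => iter F n ⋙ F

/-- The entropy `h_t(F)` of an endofunctor `F`, computed with the split-generator `G`
(the defining limit exists and agrees with the `limsup` used here). -/
noncomputable def entropy (F : C ⥤ C) (G : C) (t : ℝ) : EReal :=
  Filter.atTop.limsup fun m : ℕ =>
    (((m : ℝ)⁻¹ : ℝ) : EReal) * (complexity C t G ((iter C F m).obj G)).log

end Defs


section Fekete

variable {c c' : ℕ → ℝ≥0∞}

lemma exists_forall_le_mul_pow_of_submultiplicative (hc : ∀ n, c n ≠ ⊤)
    (hmul : ∀ m n, c (m + n) ≤ c m * c n) {k : ℕ} (hk : 0 < k) {b : ℝ≥0∞} (hb₀ : b ≠ 0)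
    (hb : b ≠ ⊤) (hbk : c k ≤ b ^ k) :
    ∃ K ≠ ⊤, ∀ n, c n ≤ K * b ^ n := by
  -- `K` bounds the contribution `c r / b ^ r` of the remainder `r` of `n` modulo `k`
  refine ⟨∑ r ∈ Finset.range k, c r * (b ^ r)⁻¹, ENNReal.sum_ne_top.2 fun r _ =>
    ENNReal.mul_ne_top (hc r) (ENNReal.inv_ne_top.2 (pow_ne_zero r hb₀)), fun n => ?_⟩
  induction n using Nat.strong_induction_on with
  | _ n ih =>
    by_cases hn : n < k
    · calc c n = c n * (b ^ n)⁻¹ * b ^ n := by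
            rw [mul_assoc, ENNReal.inv_mul_cancel (pow_ne_zero n hb₀) (ENNReal.pow_ne_top hb),
              mul_one]
        _ ≤ (∑ r ∈ Finset.range k, c r * (b ^ r)⁻¹) * b ^ n := by
            gcongr
            exact Finset.single_le_sum (f := fun r => c r * (b ^ r)⁻¹) (fun _ _ => zero_le)
              (Finset.mem_range.2 hn)
    · obtain ⟨d, rfl⟩ := Nat.exists_eq_add_of_le (not_lt.1 hn)
      calc c (k + d) ≤ b ^ k * ((∑ r ∈ Finset.range k, c r * (b ^ r)⁻¹) * b ^ d) :=
            (hmul k d).trans (mul_le_mul' hbk (ih d (by omega)))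
        _ = (∑ r ∈ Finset.range k, c r * (b ^ r)⁻¹) * b ^ (k + d) := by ring

lemma expGrowthSup_le_expGrowthInf_of_submultiplicative (hc : ∀ n, c n ≠ ⊤)
    (hmul : ∀ m n, c (m + n) ≤ c m * c n) :
    ExpGrowth.expGrowthSup c ≤ ExpGrowth.expGrowthInf c := by
  refine le_of_forall_gt_imp_ge_of_dense fun a ha => ?_
  obtain ⟨s, hs, hsa⟩ := EReal.lt_iff_exists_real_btwn.1 ha
  obtain ⟨k, hck, hk⟩ :=
    ((ExpGrowth.frequently_le_exp hs).and_eventually (eventually_gt_atTop 0)).exists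
  rw [mul_comm, EReal.exp_nmul] at hck
  obtain ⟨K, hK, hcK⟩ := exists_forall_le_mul_pow_of_submultiplicative hc hmul hk
    (by simp [Real.exp_pos]) (by simp) hck
  calc ExpGrowth.expGrowthSup c ≤ ExpGrowth.expGrowthSup (fun n => EReal.exp s ^ n) :=
        ExpGrowth.expGrowthSup_le_of_eventually_le hK (Eventually.of_forall hcK)
    _ = s := by rw [ExpGrowth.expGrowthSup_pow, EReal.log_exp]
    _ ≤ a := hsa.le

lemma tendsto_log_div_of_submultiplicative (hc : ∀ n, c n ≠ ⊤)
    (hmul : ∀ m n, c (m + n) ≤ c m * c n) {K K' : ℝ≥0∞} (hK : K ≠ ⊤) (hK' : K' ≠ ⊤)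
    (h : ∀ n, c' n ≤ K * c n) (h' : ∀ n, c n ≤ K' * c' n) :
    Tendsto (fun n : ℕ => (c' n).log / n) atTop (nhds (ExpGrowth.expGrowthSup c)) :=
  tendsto_of_le_liminf_of_limsup_le
    ((expGrowthSup_le_expGrowthInf_of_submultiplicative hc hmul).trans
      (ExpGrowth.expGrowthInf_le_of_eventually_le hK' (Eventually.of_forall h')))
    (ExpGrowth.expGrowthSup_le_of_eventually_le hK (Eventually.of_forall h))

lemma inv_natCast_mul_eq_div (x : EReal) (n : ℕ) : (((n : ℝ)⁻¹ : ℝ) : EReal) * x = x / n := by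
  rw [EReal.coe_inv, EReal.div_eq_inv_mul]
  rfl

end Fekete

section Algebra

lemma isNilpotent_mul_comm {R : Type*} [Ring R] {a b : R} (h : IsNilpotent (a * b)) :
    IsNilpotent (b * a) := by
  obtain ⟨n, hn⟩ := h
  refine ⟨n + 1, ?_⟩
  rw [pow_succ', mul_assoc, ← mul_pow_mul, hn, zero_mul, mul_zero]

lemma eq_zero_of_isIdempotentElem_of_mem_jacobson_bot {R : Type*} [Ring R] {e : R}
    (he : IsIdempotentElem e) (hmem : e ∈ Ideal.jacobson (⊥ : Ideal R)) : e = 0 := by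
  obtain ⟨z, hz⟩ := Ideal.mem_jacobson_iff.1 hmem (-1)
  have hz' : z * (1 - e) = 1 := by
    rw [Submodule.mem_bot] at hz
    rw [← sub_eq_zero, ← hz]
    noncomm_ring
  calc e = z * (1 - e) * e := by rw [hz', one_mul]
    _ = 0 := by rw [mul_assoc, sub_mul, he.eq, one_mul, sub_self, mul_zero]

lemma mem_jacobson_bot_of_forall_isNilpotent_mul {R : Type*} [Ring R] {x : R}
    (h : ∀ y, IsNilpotent (y * x)) : x ∈ Ideal.jacobson (⊥ : Ideal R) := by
  refine Ideal.mem_jacobson_iff.2 fun y => ?_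
  obtain ⟨z, hz⟩ := (h y).isUnit_add_one.exists_left_inv
  refine ⟨z, ?_⟩
  rw [Submodule.mem_bot, mul_assoc, ← mul_add_one, hz, sub_self]

lemma pow_add_mul_pow_eq_pow {R : Type*} [CommRing R] {x y : R} {n : ℕ}
    (h : x ^ (n + 1) * y = x ^ n) (m : ℕ) : x ^ (n + m) * y ^ m = x ^ n := by
  induction m with
  | zero => simp
  | succ m ih =>
    calc x ^ (n + (m + 1)) * y ^ (m + 1) = x ^ (n + 1) * y * x ^ m * y ^ m := by ring
      _ = x ^ n := by rw [h, ← pow_add, ih]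

lemma exists_isIdempotentElem_mul_ne_zero {R : Type*} [CommRing R] [IsArtinianRing R] {x : R}
    (hx : ¬ IsNilpotent x) : ∃ y, IsIdempotentElem (x * y) ∧ x * y ≠ 0 := by
  obtain ⟨n, y, hy⟩ := IsArtinian.exists_pow_succ_smul_dvd x (1 : R)
  have hy : x ^ (n + 1) * y = x ^ n := by simpa using hy
  have hpow : x ^ (n + 1) * (x ^ (n + 1) * y ^ (n + 1)) = x ^ (n + 1) := by
    calc x ^ (n + 1) * (x ^ (n + 1) * y ^ (n + 1))
        = x * (x ^ (n + (n + 1)) * y ^ (n + 1)) := by ring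
      _ = x ^ (n + 1) := by rw [pow_add_mul_pow_eq_pow hy, pow_succ']
  have hfactor : x * (x ^ n * y ^ (n + 1)) = x ^ (n + 1) * y ^ (n + 1) := by ring
  refine ⟨x ^ n * y ^ (n + 1), ?_, fun h => hx ⟨n + 1, ?_⟩⟩
  · rw [hfactor, IsIdempotentElem, mul_right_comm, hpow]
  · rw [← hpow, ← hfactor, h, mul_zero]

lemma exists_commute_isIdempotentElem_mul_ne_zero (k : Type*) {A : Type*} [Field k] [Ring A]
    [Algebra k A] [FiniteDimensional k A] {x : A} (hx : ¬ IsNilpotent x) :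
    ∃ y, Commute x y ∧ IsIdempotentElem (x * y) ∧ x * y ≠ 0 := by
  let S := Algebra.adjoin k {x}
  let x' : S := ⟨x, Algebra.self_mem_adjoin_singleton k x⟩
  have : IsArtinianRing S := isArtinian_of_tower k inferInstance
  have hx' : ¬ IsNilpotent x' := fun h => hx (h.map S.val)
  obtain ⟨y, hidem, hne⟩ := exists_isIdempotentElem_mul_ne_zero hx'
  exact ⟨y, congrArg S.val (mul_comm x' y), hidem.map S.val,
    fun h => hne (Subtype.ext h)⟩

end Algebra

section HomRank

variable {C : Type u} [Category.{v} C] [Preadditive C] (k : Type*) [Field k] [Linear k C]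

/-- The map `Hom(g, p) : Hom(W, M) → Hom(X, N)`, `h ↦ g ≫ h ≫ p`. -/
def homMap {X W M N : C} (g : X ⟶ W) (p : M ⟶ N) : (W ⟶ M) →ₗ[k] (X ⟶ N) :=
  Linear.leftComp k N g ∘ₗ Linear.rightComp k W p

@[simp]
lemma homMap_apply {X W M N : C} (g : X ⟶ W) (p : M ⟶ N) (h : W ⟶ M) :
    homMap k g p h = g ≫ h ≫ p := rfl

/-- The rank of `Hom(g, p)`. For an idempotent `p` it plays the role of the rank of
`Hom(g, im p)`, although `p` need not split. -/
noncomputable def homRank {X W M N : C} (g : X ⟶ W) (p : M ⟶ N) : ℕ :=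
  Module.finrank k (LinearMap.range (homMap k g p))

variable {k}

@[simp]
lemma homRank_zero {X W M N : C} (g : X ⟶ W) : homRank k g (0 : M ⟶ N) = 0 := by
  have hzero : homMap k g (0 : M ⟶ N) = 0 := by
    ext
    simp
  rw [homRank, hzero, LinearMap.range_zero, finrank_bot]

variable [∀ X Y : C, FiniteDimensional k (X ⟶ Y)]

lemma homRank_id_eq_zero_iff {M N : C} {p : M ⟶ N} : homRank k (𝟙 M) p = 0 ↔ p = 0 := by
  refine ⟨fun h => ?_, fun h => h ▸ homRank_zero _⟩
  rw [homRank, Submodule.finrank_eq_zero, LinearMap.range_eq_bot] at h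
  simpa using LinearMap.congr_fun h (𝟙 M)

lemma homRank_comp_le_left {X W M N L : C} (g : X ⟶ W) (p : M ⟶ N) (b : N ⟶ L) :
    homRank k g (p ≫ b) ≤ homRank k g p := by
  have hcomp : homMap k g (p ≫ b) = Linear.rightComp k X b ∘ₗ homMap k g p := by
    ext h
    simp
  rw [homRank, hcomp, LinearMap.range_comp]
  exact Submodule.finrank_map_le _ _

lemma homRank_comp_le_right {X W M N L : C} (g : X ⟶ W) (a : L ⟶ M) (p : M ⟶ N) :
    homRank k g (a ≫ p) ≤ homRank k g p := by
  have hcomp : homMap k g (a ≫ p) = homMap k g p ∘ₗ Linear.rightComp k W a := by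
    ext h
    simp
  rw [homRank, hcomp]
  exact Submodule.finrank_mono (LinearMap.range_comp_le_range _ _)

lemma homRank_add_of_orthogonal {X W M : C} (g : X ⟶ W) {p q : M ⟶ M} (hp : p ≫ p = p)
    (hq : q ≫ q = q) (hpq : p ≫ q = 0) (hqp : q ≫ p = 0) :
    homRank k g (p + q) = homRank k g p + homRank k g q := by
  have hsup : LinearMap.range (homMap k g (p + q)) =
      LinearMap.range (homMap k g p) ⊔ LinearMap.range (homMap k g q) := by
    apply le_antisymm
    · rintro _ ⟨h, rfl⟩
      exact Submodule.mem_sup.2 ⟨_, ⟨h, rfl⟩, _, ⟨h, rfl⟩, by simp⟩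
    · refine sup_le ?_ ?_ <;> rintro _ ⟨h, rfl⟩
      · exact ⟨h ≫ p, by simp [hp, hpq]⟩
      · exact ⟨h ≫ q, by simp [hq, hqp]⟩
  have hinf : LinearMap.range (homMap k g p) ⊓ LinearMap.range (homMap k g q) = ⊥ := by
    rw [eq_bot_iff]
    rintro _ ⟨⟨h, rfl⟩, h', hh'⟩
    calc g ≫ h ≫ p = (g ≫ h' ≫ q) ≫ p := by
          rw [show g ≫ h' ≫ q = g ≫ h ≫ p from hh']; simp [hp]
      _ = 0 := by simp [hqp]
  rw [homRank, hsup, homRank, homRank, ← Submodule.finrank_sup_add_finrank_inf_eq, hinf,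
    finrank_bot, add_zero]

end HomRank

section PartialInverse

variable {C : Type u} [Category.{v} C]

/-- `a` and `b` are mutually inverse isomorphisms between a summand of `M` and a summand of `N`,
namely the possibly non-split images of the idempotents `a ≫ b` and `b ≫ a`. -/
structure IsPartialInverse {M N : C} (a : M ⟶ N) (b : N ⟶ M) : Prop where
  comp_left : a ≫ b ≫ a = a
  comp_right : b ≫ a ≫ b = b

namespace IsPartialInverse

variable {M N : C} {a a' : M ⟶ N} {b b' : N ⟶ M}

lemma symm (h : IsPartialInverse a b) : IsPartialInverse b a := ⟨h.comp_right, h.comp_left⟩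

lemma idem (h : IsPartialInverse a b) : (a ≫ b) ≫ a ≫ b = a ≫ b := by
  rw [Category.assoc, h.comp_right]

variable [Preadditive C]

lemma zero : IsPartialInverse (0 : M ⟶ N) 0 := ⟨by simp, by simp⟩

lemma add (h : IsPartialInverse a b) (h' : IsPartialInverse a' b') (hab' : a ≫ b' = 0)
    (ha'b : a' ≫ b = 0) (hba' : b ≫ a' = 0) (hb'a : b' ≫ a = 0) :
    IsPartialInverse (a + a') (b + b') where
  comp_left := by
    simp [h.comp_left, h'.comp_left, reassoc_of% hab', reassoc_of% ha'b, hba', hb'a]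
  comp_right := by
    simp [h.comp_right, h'.comp_right, hab', ha'b, reassoc_of% hba', reassoc_of% hb'a]

section Rank

variable {k : Type*} [Field k] [Linear k C] [∀ X Y : C, FiniteDimensional k (X ⟶ Y)]

lemma homRank_comp_le (h : IsPartialInverse a b) {X W : C} (g : X ⟶ W) :
    homRank k g (a ≫ b) ≤ homRank k g (b ≫ a) :=
  calc homRank k g (a ≫ b) = homRank k g (a ≫ (b ≫ a) ≫ b) := by
        rw [Category.assoc, h.comp_right]
    _ ≤ homRank k g ((b ≫ a) ≫ b) := homRank_comp_le_right ..
    _ ≤ homRank k g (b ≫ a) := homRank_comp_le_left ..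

lemma homRank_comp_comm (h : IsPartialInverse a b) {X W : C} (g : X ⟶ W) :
    homRank k g (a ≫ b) = homRank k g (b ≫ a) :=
  (h.homRank_comp_le g).antisymm (h.symm.homRank_comp_le g)

lemma compl_idem (h : IsPartialInverse a b) :
    (𝟙 M - a ≫ b) ≫ (𝟙 M - a ≫ b) = 𝟙 M - a ≫ b := by
  simp [h.comp_right]

lemma homRank_comp_add_compl (h : IsPartialInverse a b) {X W : C} (g : X ⟶ W) :
    homRank k g (a ≫ b) + homRank k g (𝟙 M - a ≫ b) = homRank k g (𝟙 M) := by
  rw [← homRank_add_of_orthogonal g h.idem h.compl_idem (by simp [h.comp_right])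
    (by simp [h.comp_right]), add_sub_cancel]

lemma homRank_compl (h : IsPartialInverse a b) {X W : C} (g : X ⟶ W)
    (hg : homRank k g (𝟙 M) = homRank k g (𝟙 N)) :
    homRank k g (𝟙 M - a ≫ b) = homRank k g (𝟙 N - b ≫ a) := by
  have hM := h.homRank_comp_add_compl (k := k) g
  have hN := h.symm.homRank_comp_add_compl (k := k) g
  have hcomm := h.homRank_comp_comm (k := k) g
  omega

end Rank

end IsPartialInverse

lemma exists_isPartialInverse_of_not_isNilpotent [Preadditive C] (k : Type*) [Field k] [Linear k C]
    [∀ X Y : C, FiniteDimensional k (X ⟶ Y)] {M N : C} {f : M ⟶ N} {g : N ⟶ M}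
    (h : ¬ IsNilpotent (End.of (f ≫ g))) :
    ∃ (s : N ⟶ M) (t : M ⟶ N), IsPartialInverse (f ≫ s ≫ f) (g ≫ t ≫ g) ∧
      (f ≫ s ≫ f) ≫ g ≫ t ≫ g ≠ 0 := by
  have : FiniteDimensional k (End M) := inferInstanceAs (FiniteDimensional k (M ⟶ M))
  obtain ⟨y, hcomm, hidem, hne⟩ := exists_commute_isIdempotentElem_mul_ne_zero k h
  obtain ⟨e, he⟩ : ∃ e : M ⟶ M, e = y ≫ f ≫ g := ⟨_, rfl⟩
  have he' : f ≫ g ≫ y = e := by simpa [End.mul_def, he] using hcomm.eq.symm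
  have hee : e ≫ e = e := by rw [he]; exact hidem
  have ha : f ≫ (g ≫ y) ≫ f = e ≫ f := by rw [← he']; simp
  have hb : g ≫ (y ≫ y ≫ f) ≫ g = g ≫ y ≫ e := by rw [he]; simp
  have hab : (e ≫ f) ≫ g ≫ y ≫ e = e := by simp [reassoc_of% he', hee]
  refine ⟨g ≫ y, y ≫ y ≫ f, ?_⟩
  rw [ha, hb, hab]
  refine ⟨⟨?_, ?_⟩, by rw [he]; exact hne⟩
  · rw [← Category.assoc, hab, reassoc_of% hee]
  · rw [hab, Category.assoc, Category.assoc, hee]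

variable [Preadditive C] (k : Type*) [Field k] [Linear k C]
  [∀ X Y : C, FiniteDimensional k (X ⟶ Y)] {M N : C}

-- If `f ≫ g` were not nilpotent, the maximal pair `a`, `b` could be enlarged.
lemma IsPartialInverse.isNilpotent_comp_of_forall_homRank_le {a : M ⟶ N} {b : N ⟶ M}
    (h : IsPartialInverse a b)
    (hmax : ∀ (a' : M ⟶ N) (b' : N ⟶ M), IsPartialInverse a' b' →
      homRank k (𝟙 M) (a' ≫ b') ≤ homRank k (𝟙 M) (a ≫ b))
    {f : M ⟶ N} {g : N ⟶ M} (hbf : b ≫ f = 0) (hfb : f ≫ b = 0) (hag : a ≫ g = 0)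
    (hga : g ≫ a = 0) : IsNilpotent (End.of (f ≫ g)) := by
  by_contra hnil
  obtain ⟨s, t, h', hne⟩ := exists_isPartialInverse_of_not_isNilpotent k hnil
  have hsum := h.add h' (by simp [reassoc_of% hag]) (by simp [hfb]) (by simp [reassoc_of% hbf])
    (by simp [hga])
  have hle := hmax _ _ hsum
  have hcomp : (a + f ≫ s ≫ f) ≫ (b + g ≫ t ≫ g) =
      a ≫ b + (f ≫ s ≫ f) ≫ g ≫ t ≫ g := by
    simp [reassoc_of% hag, hfb]
  rw [hcomp, homRank_add_of_orthogonal (𝟙 M) h.idem h'.idem (by simp [reassoc_of% hbf])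
    (by simp [reassoc_of% hga])] at hle
  exact hne (homRank_id_eq_zero_iff.1 (by omega : homRank k (𝟙 M) _ = 0))

variable (M N) in
lemma exists_isPartialInverse_forall_homRank_le :
    ∃ (a : M ⟶ N) (b : N ⟶ M), IsPartialInverse a b ∧
      ∀ (a' : M ⟶ N) (b' : N ⟶ M), IsPartialInverse a' b' →
        homRank k (𝟙 M) (a' ≫ b') ≤ homRank k (𝟙 M) (a ≫ b) := by
  let ranks : Set ℕ := {n | ∃ (a : M ⟶ N) (b : N ⟶ M), IsPartialInverse a b ∧
    homRank k (𝟙 M) (a ≫ b) = n}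
  have hbdd : BddAbove ranks := ⟨Module.finrank k (M ⟶ M), by
    rintro _ ⟨a, b, -, rfl⟩
    exact Submodule.finrank_le _⟩
  obtain ⟨a, b, hab, hmax⟩ := Nat.sSup_mem (s := ranks) ⟨_, 0, 0, .zero, rfl⟩ hbdd
  exact ⟨a, b, hab, fun a' b' h' => hmax ▸ le_csSup hbdd ⟨a', b', h', rfl⟩⟩

end PartialInverse

section HomRankEq

variable {C : Type u} [Category.{v} C] [Preadditive C] [HasFiniteBiproducts C]
  (k : Type*) [Field k] [Linear k C] [∀ X Y : C, FiniteDimensional k (X ⟶ Y)] {M N : C}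

-- A basis of `Hom(M, N)` defines an approximation `M ⟶ Nʳ`, along which all `p ≫ h ≫ q` factor.
lemma exists_homRank_le_homRank_biproduct_lift (p : M ⟶ M) {q : N ⟶ N} (hq : q ≫ q = q) :
    ∃ (r : ℕ) (β : Fin r → (M ⟶ N)),
      homRank k p q ≤ homRank k (biproduct.lift fun i => p ≫ β i ≫ q) q := by
  let β := Module.finBasis k (M ⟶ N)
  refine ⟨_, β, Submodule.finrank_mono ?_⟩
  rintro _ ⟨h, rfl⟩
  refine ⟨biproduct.desc fun i => β.repr h i • 𝟙 N, ?_⟩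
  calc biproduct.lift (fun i => p ≫ β i ≫ q) ≫ biproduct.desc (fun i => β.repr h i • 𝟙 N) ≫ q
      = p ≫ (∑ i, β.repr h i • β i) ≫ q := by
        simp [-Module.Basis.sum_repr, biproduct.lift_desc_assoc, Preadditive.sum_comp,
          Preadditive.comp_sum, hq]
    _ = p ≫ h ≫ q := by rw [β.sum_repr]

lemma exists_eq_sum_comp_of_homRank_eq {p : M ⟶ M} (hp : p ≫ p = p) {q : N ⟶ N} (hq : q ≫ q = q)
    (h : ∀ {X W : C} (g : X ⟶ W), homRank k g p = homRank k g q) :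
    ∃ (r : ℕ) (β : Fin r → (M ⟶ N)) (η : Fin r → (N ⟶ M)),
      p = ∑ i, (p ≫ β i ≫ q) ≫ q ≫ η i ≫ p := by
  obtain ⟨r, β, hβ⟩ := exists_homRank_le_homRank_biproduct_lift k p hq
  let g : M ⟶ ⨁ fun _ : Fin r => N := biproduct.lift fun i => p ≫ β i ≫ q
  have hpg : p ≫ g = g := by
    ext i
    simp [g, reassoc_of% hp]
  have hle : LinearMap.range (homMap k g p) ≤ LinearMap.range (homMap k p p) := by
    rintro _ ⟨l, rfl⟩
    exact ⟨g ≫ l, by simp [reassoc_of% hpg]⟩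
  have hrank : homRank k p p ≤ homRank k g p := by rwa [h p, h g]
  have hmem : p ∈ LinearMap.range (homMap k g p) := by
    rw [Submodule.eq_of_le_of_finrank_le hle hrank]
    exact ⟨𝟙 M, by simp [hp]⟩
  obtain ⟨l, hl⟩ := hmem
  refine ⟨r, β, fun i => biproduct.ι (fun _ => N) i ≫ l, hl.symm.trans ?_⟩
  simp [g, biproduct.lift_eq, Preadditive.sum_comp, reassoc_of% hq]

-- An analogue of a theorem of Auslander and Bongartz: the complements `p` and `q` of a maximal
-- common summand have the same ranks, so `p` is a sum of endomorphisms factoring through `q`. By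
-- maximality these lie in the Jacobson radical of `End M`, whence `p = 0`.
theorem nonempty_iso_of_homRank_eq
    (h : ∀ {X W : C} (g : X ⟶ W), homRank k g (𝟙 M) = homRank k g (𝟙 N)) :
    Nonempty (M ≅ N) := by
  obtain ⟨a, b, hab, hmax⟩ := exists_isPartialInverse_forall_homRank_le k M N
  obtain ⟨p, hp⟩ : ∃ p, p = 𝟙 M - a ≫ b := ⟨_, rfl⟩
  obtain ⟨q, hq⟩ : ∃ q, q = 𝟙 N - b ≫ a := ⟨_, rfl⟩
  have hpp : p ≫ p = p := hp ▸ hab.compl_idem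
  have hqq : q ≫ q = q := hq ▸ hab.symm.compl_idem
  have hpa : p ≫ a = 0 := by simp [hp, hab.comp_left]
  have hbp : b ≫ p = 0 := by simp [hp, hab.comp_right]
  have hqb : q ≫ b = 0 := by simp [hq, hab.comp_right]
  have haq : a ≫ q = 0 := by simp [hq, hab.comp_left]
  have hpq : ∀ {X W : C} (g : X ⟶ W), homRank k g p = homRank k g q := fun g =>
    hp ▸ hq ▸ hab.homRank_compl g (h g)
  obtain ⟨r, β, η, hsum⟩ := exists_eq_sum_comp_of_homRank_eq k hpp hqq hpq
  have hrad : ∀ i, End.of ((p ≫ β i ≫ q) ≫ q ≫ η i ≫ p) ∈ Ideal.jacobson (⊥ : Ideal (End M)) := by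
    refine fun i => mem_jacobson_bot_of_forall_isNilpotent_mul fun y => ?_
    have hnil := hab.isNilpotent_comp_of_forall_homRank_le k hmax (f := p ≫ (y ≫ p ≫ β i) ≫ q)
      (g := q ≫ η i ≫ p) (by simp [reassoc_of% hbp]) (by simp [hqb])
      (by simp [reassoc_of% haq]) (by simp [hpa])
    have hcomm := isNilpotent_mul_comm (a := End.of ((p ≫ β i ≫ q) ≫ q ≫ η i ≫ p))
      (b := y * End.of p) (by simpa [End.mul_def] using hnil)
    simpa [End.mul_def, End.of, reassoc_of% hpp] using hcomm
  have hp0 : p = 0 := by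
    refine eq_zero_of_isIdempotentElem_of_mem_jacobson_bot (R := End M) hpp ?_
    rw [hsum]
    exact Submodule.sum_mem _ fun i _ => hrad i
  have hq0 : q = 0 := by
    rw [← homRank_id_eq_zero_iff (k := k), ← hpq, hp0, homRank_zero]
  exact ⟨⟨a, b, (sub_eq_zero.1 (hp ▸ hp0)).symm, (sub_eq_zero.1 (hq ▸ hq0)).symm⟩⟩

end HomRankEq

section HomDimensions

variable {C : Type u} [Category.{v} C] [Preadditive C] [HasZeroObject C]
  [HasShift C ℤ] [∀ n : ℤ, (shiftFunctor C n).Additive] [Pretriangulated C]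
  {k : Type*} [Field k] [Linear k C] [∀ X Y : C, FiniteDimensional k (X ⟶ Y)]

lemma homRank_add_homRank_rotate {T : Triangle C} (hT : T ∈ distTriang C) (M : C) :
    homRank k T.mor₁ (𝟙 M) + homRank k T.rotate.mor₁ (𝟙 M) = Module.finrank k (T.obj₂ ⟶ M) := by
  have hexact : LinearMap.ker (homMap k T.mor₁ (𝟙 M)) =
      LinearMap.range (homMap k T.mor₂ (𝟙 M)) := by
    ext h
    constructor
    · intro hh
      obtain ⟨l, rfl⟩ := Triangle.yoneda_exact₂ T hT h (by simpa using hh)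
      exact ⟨l, by simp⟩
    · rintro ⟨l, rfl⟩
      simp [comp_distTriang_mor_zero₁₂_assoc T hT]
  rw [← (homMap k T.mor₁ (𝟙 M)).finrank_range_add_finrank_ker, hexact]
  rfl

lemma homRank_eq_of_homRank_rotate_eq {M N : C}
    (hdim : ∀ Z : C, Module.finrank k (Z ⟶ M) = Module.finrank k (Z ⟶ N)) {T : Triangle C}
    (hT : T ∈ distTriang C)
    (h : homRank k T.rotate.mor₁ (𝟙 M) = homRank k T.rotate.mor₁ (𝟙 N)) :
    homRank k T.mor₁ (𝟙 M) = homRank k T.mor₁ (𝟙 N) := by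
  have hM := homRank_add_homRank_rotate (k := k) hT M
  have hN := homRank_add_homRank_rotate (k := k) hT N
  rw [hdim] at hM
  omega

lemma homRank_mor₁_eq_of_subsingleton {M N : C}
    (hdim : ∀ Z : C, Module.finrank k (Z ⟶ M) = Module.finrank k (Z ⟶ N)) (n : ℕ)
    {T : Triangle C} (hT : T ∈ distTriang C) (hM : Subsingleton (T.obj₁⟦(n : ℤ)⟧ ⟶ M))
    (hN : Subsingleton (T.obj₁⟦(n : ℤ)⟧ ⟶ N)) :
    homRank k T.mor₁ (𝟙 M) = homRank k T.mor₁ (𝟙 N) := by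
  induction n generalizing T with
  | zero =>
    have hzero : ∀ Y : C, Subsingleton (T.obj₁⟦((0 : ℕ) : ℤ)⟧ ⟶ Y) →
        homRank k T.mor₁ (𝟙 Y) = 0 := fun Y _ => by
      have : Subsingleton (T.obj₁ ⟶ Y) :=
        (((shiftFunctorZero' C ((0 : ℕ) : ℤ) Nat.cast_zero).app T.obj₁).symm.homCongr
          (Iso.refl Y)).subsingleton
      exact Module.finrank_zero_of_subsingleton
    rw [hzero M hM, hzero N hN]
  | succ n ih =>
    have hshift : ∀ Y : C, Subsingleton (T.obj₁⟦((n + 1 : ℕ) : ℤ)⟧ ⟶ Y) →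
        Subsingleton (T.obj₁⟦(1 : ℤ)⟧⟦(n : ℤ)⟧ ⟶ Y) := fun Y _ =>
      (((shiftFunctorAdd' C 1 (n : ℤ) ((n + 1 : ℕ) : ℤ) (by push_cast; ring)).app
        T.obj₁).symm.homCongr (Iso.refl Y)).subsingleton
    have hT₁ := rot_of_distTriang _ hT
    have hT₂ := rot_of_distTriang _ hT₁
    have hT₃ := rot_of_distTriang _ hT₂
    -- the third rotation of `T` starts with `T.obj₁⟦1⟧`
    exact homRank_eq_of_homRank_rotate_eq hdim hT <| homRank_eq_of_homRank_rotate_eq hdim hT₁ <|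
      homRank_eq_of_homRank_rotate_eq hdim hT₂ <| ih hT₃ (hshift M hM) (hshift N hN)

theorem nonempty_iso_of_finrank_eq
    (hvanish : ∀ X Y : C, ∀ᶠ n : ℕ in atTop, Subsingleton (X⟦(n : ℤ)⟧ ⟶ Y)) {M N : C}
    (hdim : ∀ Z : C, Module.finrank k (Z ⟶ M) = Module.finrank k (Z ⟶ N)) : Nonempty (M ≅ N) := by
  refine nonempty_iso_of_homRank_eq k fun {X W} g => ?_
  obtain ⟨Z, g', g'', hT⟩ := distinguished_cocone_triangle g
  obtain ⟨n, hM, hN⟩ := ((hvanish X M).and (hvanish X N)).exists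
  exact homRank_mor₁_eq_of_subsingleton hdim n hT hM hN

end HomDimensions

section LinearAlgebra

variable {k : Type*} [Field k]

lemma finrank_map_add_finrank_inf_ker {V W : Type*} [AddCommGroup V] [Module k V]
    [FiniteDimensional k V] [AddCommGroup W] [Module k W] (f : V →ₗ[k] W) (S : Submodule k V) :
    Module.finrank k (S.map f) + Module.finrank k (S ⊓ LinearMap.ker f : Submodule k V) =
      Module.finrank k S := by
  rw [← (f.domRestrict S).finrank_range_add_finrank_ker, LinearMap.range_domRestrict,
    LinearMap.ker_domRestrict, ← Submodule.map_comap_subtype,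
    (Submodule.equivMapOfInjective _ S.injective_subtype _).finrank_eq]

lemma finrank_add_finrank_range_eq {P D E D' E' : Type*} [AddCommGroup P] [Module k P]
    [FiniteDimensional k P] [AddCommGroup D] [Module k D] [AddCommGroup E] [Module k E]
    [FiniteDimensional k E] [AddCommGroup D'] [Module k D'] [AddCommGroup E'] [Module k E']
    {f : D →ₗ[k] E} {p : E →ₗ[k] P} {q : P →ₗ[k] D'} {f' : D' →ₗ[k] E'}
    (hf : LinearMap.range f = LinearMap.ker p) (hp : LinearMap.range p = LinearMap.ker q)
    (hq : LinearMap.range q = LinearMap.ker f') :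
    Module.finrank k P + Module.finrank k (LinearMap.range f) =
      Module.finrank k E + Module.finrank k (LinearMap.ker f') := by
  rw [hf, ← hq, ← p.finrank_range_add_finrank_ker, ← q.finrank_range_add_finrank_ker, hp]
  omega

variable {A B B' D E : Type*} [AddCommGroup A] [Module k A] [AddCommGroup B] [Module k B]
  [AddCommGroup B'] [Module k B'] [AddCommGroup D] [Module k D] [AddCommGroup E] [Module k E]
  {f : D →ₗ[k] E} {u : D →ₗ[k] B'} {v : E →ₗ[k] B} {j : B' →ₗ[k] B}

lemma finrank_coker_comparison [FiniteDimensional k B] [FiniteDimensional k E] {δ : B →ₗ[k] A}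
    (hcomm : v ∘ₗ f = j ∘ₗ u) (hv : LinearMap.range v = LinearMap.ker δ)
    (hu : LinearMap.range u = LinearMap.ker (δ ∘ₗ j)) (hf : LinearMap.ker v ≤ LinearMap.range f) :
    Module.finrank k E + Module.finrank k (LinearMap.range j) +
        Module.finrank k (LinearMap.range δ) =
      Module.finrank k B + Module.finrank k (LinearMap.range f) +
        Module.finrank k (LinearMap.range (δ ∘ₗ j)) := by
  have himage : (LinearMap.range f).map v = LinearMap.range j ⊓ LinearMap.ker δ := by
    rw [← LinearMap.range_comp, hcomm, LinearMap.range_comp, hu, LinearMap.ker_comp,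
      Submodule.map_comap_eq]
  have hfv := finrank_map_add_finrank_inf_ker v (LinearMap.range f)
  have hjδ := finrank_map_add_finrank_inf_ker δ (LinearMap.range j)
  rw [himage, inf_eq_right.2 hf] at hfv
  rw [← LinearMap.range_comp] at hjδ
  have hE := v.finrank_range_add_finrank_ker
  have hB := δ.finrank_range_add_finrank_ker
  rw [hv] at hE
  omega

lemma finrank_ker_comparison [FiniteDimensional k A] [FiniteDimensional k D] {i : A →ₗ[k] D}
    (hcomm : v ∘ₗ f = j ∘ₗ u) (hi : LinearMap.range i = LinearMap.ker u)
    (hv : LinearMap.ker v ≤ LinearMap.range (f ∘ₗ i)) (hu : LinearMap.ker j ≤ LinearMap.range u) :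
    Module.finrank k (LinearMap.ker f) + Module.finrank k (LinearMap.ker i) =
      Module.finrank k (LinearMap.ker j) + Module.finrank k (LinearMap.ker (f ∘ₗ i)) := by
  have himage : (LinearMap.ker f).map u = LinearMap.ker j := by
    refine le_antisymm ?_ fun b hb => ?_
    · rintro _ ⟨d, hd, rfl⟩
      simpa [LinearMap.mem_ker.1 hd] using (LinearMap.congr_fun hcomm d).symm
    · obtain ⟨d, rfl⟩ := hu hb
      obtain ⟨a, ha⟩ := hv (show f d ∈ LinearMap.ker v from
        (LinearMap.congr_fun hcomm d).trans hb)
      have hia : u (i a) = 0 := LinearMap.mem_ker.1 (hi ▸ ⟨a, rfl⟩)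
      exact ⟨d - i a, by simp [← ha], by simp [hia]⟩
  have hker : (LinearMap.ker (f ∘ₗ i)).map i = LinearMap.ker f ⊓ LinearMap.ker u := by
    rw [LinearMap.ker_comp, Submodule.map_comap_eq, hi, inf_comm]
  have hfu := finrank_map_add_finrank_inf_ker u (LinearMap.ker f)
  have hfi := finrank_map_add_finrank_inf_ker i (LinearMap.ker (f ∘ₗ i))
  rw [himage, ← hker] at hfu
  rw [inf_eq_right.2 (LinearMap.ker_le_ker_comp i f)] at hfi
  omega

end LinearAlgebra

section RightComp

variable (k : Type*) [Field k] {C : Type u} [Category.{v} C] [Preadditive C] [Linear k C]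

lemma rightComp_neg {X Z : C} (Y : C) (f : X ⟶ Z) :
    Linear.rightComp k Y (-f) = -Linear.rightComp k Y f := by
  ext
  simp

lemma rightComp_comp {X Z W : C} (Y : C) (f : X ⟶ Z) (g : Z ⟶ W) :
    Linear.rightComp k Y (f ≫ g) = Linear.rightComp k Y g ∘ₗ Linear.rightComp k Y f := by
  ext
  simp

end RightComp

section ExtAssoc

variable {C : Type u} [Category.{v} C] [Preadditive C] [HasZeroObject C]
  [HasShift C ℤ] [∀ n : ℤ, (shiftFunctor C n).Additive] [Pretriangulated C]

variable (C) in
/-- Half of the associativity of the extension product. It is a weak form of the octahedral axiom,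
from which it follows by `ObjectProperty.extensionProduct_assoc`. -/
def ExtAssoc : Prop :=
  ∀ P Q R : ObjectProperty C,
    P.extensionProduct (Q.extensionProduct R) ≤ (P.extensionProduct Q).extensionProduct R

variable {A B B' D E M N : C} {f : D ⟶ E} {i : A ⟶ D} {u : D ⟶ B'} {v : E ⟶ B} {j : B' ⟶ B}
  {δ : B ⟶ A⟦(1 : ℤ)⟧} {p : E ⟶ M} {p' : M ⟶ D⟦(1 : ℤ)⟧} {q : B ⟶ N} {q' : N ⟶ B'⟦(1 : ℤ)⟧}

section Linear

variable (k : Type*) [Field k] [Linear k C]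

section Exactness

variable {A E B : C} {f : A ⟶ E} {g : E ⟶ B} {h : B ⟶ A⟦(1 : ℤ)⟧}

lemma range_rightComp_mor₁ (hT : Triangle.mk f g h ∈ distTriang C) (Y : C) :
    LinearMap.range (Linear.rightComp k Y f) = LinearMap.ker (Linear.rightComp k Y g) := by
  refine le_antisymm ?_ fun a ha => ?_
  · rintro _ ⟨l, rfl⟩
    have hfg : f ≫ g = 0 := comp_distTriang_mor_zero₁₂ _ hT
    simp [hfg]
  · obtain ⟨l, rfl⟩ := Triangle.coyoneda_exact₂ _ hT a ha
    exact ⟨l, rfl⟩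

lemma range_rightComp_mor₂ (hT : Triangle.mk f g h ∈ distTriang C) (Y : C) :
    LinearMap.range (Linear.rightComp k Y g) = LinearMap.ker (Linear.rightComp k Y h) :=
  range_rightComp_mor₁ k (rot_of_distTriang _ hT) Y

lemma range_rightComp_mor₃ (hT : Triangle.mk f g h ∈ distTriang C) (Y : C) :
    LinearMap.range (Linear.rightComp k Y h) =
      LinearMap.ker (Linear.rightComp k Y (f⟦(1 : ℤ)⟧')) := by
  rw [← LinearMap.ker_neg, ← rightComp_neg]
  exact range_rightComp_mor₂ k (rot_of_distTriang _ hT) Y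

lemma range_rightComp_shift_mor₁ (hT : Triangle.mk f g h ∈ distTriang C) (Y : C) :
    LinearMap.range (Linear.rightComp k Y (f⟦(1 : ℤ)⟧')) =
      LinearMap.ker (Linear.rightComp k Y (g⟦(1 : ℤ)⟧')) := by
  rw [← LinearMap.range_neg, ← rightComp_neg]
  exact range_rightComp_mor₃ k (rot_of_distTriang _ hT) Y

lemma range_rightComp_shift_mor₂ (hT : Triangle.mk f g h ∈ distTriang C) (Y : C) :
    LinearMap.range (Linear.rightComp k Y (g⟦(1 : ℤ)⟧')) =
      LinearMap.ker (Linear.rightComp k Y (h⟦(1 : ℤ)⟧')) :=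
  range_rightComp_shift_mor₁ k (rot_of_distTriang _ hT) Y

end Exactness

variable [∀ X Y : C, FiniteDimensional k (X ⟶ Y)]

lemma finrank_hom_cone_add (hM : Triangle.mk f p p' ∈ distTriang C) (Y : C) :
    Module.finrank k (Y ⟶ M) + Module.finrank k (LinearMap.range (Linear.rightComp k Y f)) =
      Module.finrank k (Y ⟶ E) +
        Module.finrank k (LinearMap.ker (Linear.rightComp k Y (f⟦(1 : ℤ)⟧'))) :=
  finrank_add_finrank_range_eq (range_rightComp_mor₁ k hM Y) (range_rightComp_mor₂ k hM Y)
    (range_rightComp_mor₃ k hM Y)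

lemma finrank_hom_cone_eq (hcomm : u ≫ j = f ≫ v)
    (hD : Triangle.mk i u (j ≫ δ) ∈ distTriang C) (hE : Triangle.mk (i ≫ f) v δ ∈ distTriang C)
    (hM : Triangle.mk f p p' ∈ distTriang C) (hN : Triangle.mk j q q' ∈ distTriang C) (Y : C) :
    Module.finrank k (Y ⟶ M) = Module.finrank k (Y ⟶ N) := by
  have hcomm' : u⟦(1 : ℤ)⟧' ≫ j⟦(1 : ℤ)⟧' = f⟦(1 : ℤ)⟧' ≫ v⟦(1 : ℤ)⟧' := by
    rw [← Functor.map_comp, ← Functor.map_comp, hcomm]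
  have hcoker := finrank_coker_comparison
    (by rw [← rightComp_comp, ← rightComp_comp, hcomm]) (range_rightComp_mor₂ k hE Y)
    ((range_rightComp_mor₂ k hD Y).trans (by rw [rightComp_comp]))
    ((range_rightComp_mor₁ k hE Y).ge.trans
      (by rw [rightComp_comp]; exact LinearMap.range_comp_le_range _ _))
  have hker := finrank_ker_comparison (f := Linear.rightComp k Y (f⟦(1 : ℤ)⟧'))
    (v := Linear.rightComp k Y (v⟦(1 : ℤ)⟧')) (j := Linear.rightComp k Y (j⟦(1 : ℤ)⟧'))
    (by rw [← rightComp_comp, ← rightComp_comp, hcomm']) (range_rightComp_shift_mor₁ k hD Y)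
    (by rw [← rightComp_comp, ← Functor.map_comp]; exact (range_rightComp_shift_mor₁ k hE Y).ge)
    (by
      rw [range_rightComp_shift_mor₂ k hD Y, Functor.map_comp, rightComp_comp]
      exact LinearMap.ker_le_ker_comp _ _)
  have hM' := finrank_hom_cone_add k hM Y
  have hN' := finrank_hom_cone_add k hN Y
  rw [← rightComp_comp, ← range_rightComp_mor₃ k hD Y, ← Functor.map_comp,
    ← range_rightComp_mor₃ k hE Y, rightComp_comp] at hker
  omega

end Linear

theorem nonempty_iso_cone (k : Type*) [Field k] [Linear k C]
    [∀ X Y : C, FiniteDimensional k (X ⟶ Y)]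
    (hvanish : ∀ X Y : C, ∀ᶠ n : ℕ in atTop, Subsingleton (X⟦(n : ℤ)⟧ ⟶ Y))
    (hcomm : u ≫ j = f ≫ v)
    (hD : Triangle.mk i u (j ≫ δ) ∈ distTriang C) (hE : Triangle.mk (i ≫ f) v δ ∈ distTriang C)
    (hM : Triangle.mk f p p' ∈ distTriang C) (hN : Triangle.mk j q q' ∈ distTriang C) :
    Nonempty (M ≅ N) :=
  nonempty_iso_of_finrank_eq hvanish (finrank_hom_cone_eq k hcomm hD hE hM hN)

theorem extAssoc_of_eventually_subsingleton (k : Type*) [Field k] [Linear k C]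
    [∀ X Y : C, FiniteDimensional k (X ⟶ Y)]
    (hvanish : ∀ X Y : C, ∀ᶠ n : ℕ in atTop, Subsingleton (X⟦(n : ℤ)⟧ ⟶ Y)) : ExtAssoc C := by
  rintro P Q R E ⟨A, B, f, v, δ, hE, hA, B', M, j, q, q', hB, hB', hM⟩
  obtain ⟨D, i, u, hD⟩ := distinguished_cocone_triangle₂ (j ≫ δ)
  obtain ⟨f', hif, hcomm⟩ : ∃ f' : D ⟶ E, i ≫ f' = 𝟙 A ≫ f ∧ u ≫ j = f' ≫ v :=
    complete_distinguished_triangle_morphism₂ _ _ hD hE (𝟙 A) j (by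
      change (j ≫ δ) ≫ (𝟙 A)⟦(1 : ℤ)⟧' = j ≫ δ
      rw [CategoryTheory.Functor.map_id, Category.comp_id])
  rw [Category.id_comp] at hif
  subst hif
  obtain ⟨M', p, p', hM'⟩ := distinguished_cocone_triangle f'
  obtain ⟨e⟩ := nonempty_iso_cone k hvanish hcomm hD hE hM' hB
  rw [← ObjectProperty.extensionProduct_isoClosure_right]
  exact ⟨D, M', f', p, p', hM', ⟨A, B', i, u, _, hD, hA, hB'⟩, M, hM, ⟨e⟩⟩

end ExtAssoc

section FiniteType

variable {C : Type u} [Category.{v} C] [Preadditive C] [HasShift C ℤ] [Linear ℂ C]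

lemma IsFiniteType.finiteDimensional (hft : IsFiniteType C) (X Y : C) :
    FiniteDimensional ℂ (X ⟶ Y) := by
  have := (hft X Y).2 0
  exact Module.Finite.equiv (Linear.homCongr ℂ (Iso.refl X) ((shiftFunctorZero C ℤ).app Y))

lemma IsFiniteType.eventually_subsingleton (hft : IsFiniteType C) (X Y : C) :
    ∀ᶠ n : ℕ in atTop, Subsingleton (X⟦(n : ℤ)⟧ ⟶ Y) := by
  have hfinite : {n : ℕ | ¬ Subsingleton (X ⟶ Y⟦(-n : ℤ)⟧)}.Finite :=
    (hft X Y).1.preimage fun _ _ _ _ h => by simpa using h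
  rw [← Nat.cofinite_eq_atTop]
  refine hfinite.subset fun n hn hsub => hn ⟨fun f g => ?_⟩
  apply (shiftFunctor C (-n : ℤ)).map_injective
  rw [← cancel_epi ((shiftFunctorCompIsoId C (n : ℤ) (-n) (add_neg_cancel _)).app X).inv]
  exact hsub.elim _ _

variable [HasZeroObject C] [∀ n : ℤ, (shiftFunctor C n).Additive] [Pretriangulated C]

theorem IsFiniteType.extAssoc (hft : IsFiniteType C) : ExtAssoc C :=
  have := hft.finiteDimensional
  extAssoc_of_eventually_subsingleton ℂ hft.eventually_subsingleton

end FiniteType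

section Towers

variable {C : Type u} [Category.{v} C] [Preadditive C] [HasZeroObject C]
  [HasShift C ℤ] [∀ n : ℤ, (shiftFunctor C n).Additive] [Pretriangulated C]

/-- The objects obtained from `0` by successive extensions by shifts `M⟦n⟧`, with `n` running
through the list. The last extension corresponds to the head of the list. -/
def Tower (M : C) : List ℤ → ObjectProperty C
  | [] => IsZero
  | n :: l => (Tower M l).extensionProduct (.singleton (M⟦n⟧))

variable {G M X : C} {l l' : List ℤ}

lemma Tower.cons {T : Triangle C} (hT : T ∈ distTriang C) {n : ℤ} (h : Tower M l T.obj₁)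
    (e : T.obj₃ ≅ M⟦n⟧) : Tower M (n :: l) T.obj₂ := by
  rw [Tower, ← ObjectProperty.extensionProduct_isoClosure_right]
  exact ⟨_, _, _, _, _, hT, h, _, ⟨()⟩, ⟨e⟩⟩

lemma Tower.isClosedUnderIsomorphisms (M : C) :
    ∀ l, (Tower M l).IsClosedUnderIsomorphisms
  | [] => ⟨fun e h => h.of_iso e.symm⟩
  | _ :: _ => by rw [Tower]; infer_instance

lemma tower_self (M : C) : Tower M [0] M :=
  .cons (contractible_distinguished₁ M) (isZero_zero C) ((shiftFunctorZero C ℤ).symm.app M)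

lemma Tower.shift (h : Tower M l X) (k : ℤ) : Tower M (l.map (· + k)) (X⟦k⟧) := by
  induction l generalizing X with
  | nil => exact (shiftFunctor C k).map_isZero h
  | cons n l ih =>
    obtain ⟨A, _, _, _, _, hT, hA, ⟨⟩⟩ := h
    exact .cons (Triangle.shift_distinguished _ hT k) (ih hA)
      ((shiftFunctorAdd C n k).symm.app M)

lemma Tower.map (F : C ⥤ C) [F.CommShift ℤ] [F.IsTriangulated] (h : Tower M l X) :
    Tower (F.obj M) l (F.obj X) := by
  induction l generalizing X with
  | nil => exact F.map_isZero h
  | cons n l ih =>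
    obtain ⟨A, _, _, _, _, hT, hA, ⟨⟩⟩ := h
    exact .cons (F.map_distinguished _ hT) (ih hA) ((F.commShiftIso n).app M)

lemma extensionProduct_isZero_le (P : ObjectProperty C) [P.IsClosedUnderIsomorphisms] :
    P.extensionProduct IsZero ≤ P := by
  rintro X ⟨A, Z, f, _, _, hT, hA, hZ⟩
  have : IsIso f := (Triangle.isZero₃_iff_isIso₁ _ hT).1 hZ
  exact P.prop_of_iso (asIso f) hA

lemma Tower.extensionProduct_le (hC : ExtAssoc C) (M : C) (l l' : List ℤ) :
    (Tower M l).extensionProduct (Tower M l') ≤ Tower M (l' ++ l) := by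
  induction l' with
  | nil =>
    have := Tower.isClosedUnderIsomorphisms M l
    exact extensionProduct_isZero_le _
  | cons n l' ih =>
    exact (hC _ _ _).trans (ObjectProperty.monotone_extensionProduct_left _ ih)

lemma Tower.retractClosure_extensionProduct_le (hC : ExtAssoc C) (M : C) (l l' : List ℤ) :
    (Tower M l).retractClosure.extensionProduct (Tower M l').retractClosure ≤
      (Tower M (l' ++ l)).retractClosure :=
  (ObjectProperty.extensionProduct_retractClosure_retractClosure_le _ _).trans
    (ObjectProperty.monotone_retractClosure (Tower.extensionProduct_le hC M l l'))

lemma Tower.retractClosure_shift (h : (Tower M l).retractClosure X) (k : ℤ) :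
    (Tower M (l.map (· + k))).retractClosure (X⟦k⟧) :=
  let ⟨Y, hY, ⟨r⟩⟩ := h
  ⟨Y⟦k⟧, hY.shift k, ⟨r.map (shiftFunctor C k)⟩⟩

lemma Tower.retractClosure_map (F : C ⥤ C) [F.CommShift ℤ] [F.IsTriangulated]
    (h : (Tower M l).retractClosure X) : (Tower (F.obj M) l).retractClosure (F.obj X) :=
  let ⟨Y, hY, ⟨r⟩⟩ := h
  ⟨F.obj Y, hY.map F, ⟨r.map F⟩⟩

lemma Tower.retractClosure_flatMap (hC : ExtAssoc C) (hX : Tower M l X)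
    (hM : (Tower G l').retractClosure M) :
    (Tower G (l.flatMap fun n => l'.map (· + n))).retractClosure X := by
  induction l generalizing X with
  | nil => exact ObjectProperty.le_retractClosure _ _ hX
  | cons n l ih =>
    obtain ⟨A, _, f, g, h, hT, hA, ⟨⟩⟩ := hX
    exact Tower.retractClosure_extensionProduct_le hC G _ _ _
      ⟨A, _, f, g, h, hT, ih hA, Tower.retractClosure_shift hM n⟩

lemma Tower.retractClosure_trans (hC : ExtAssoc C) (hX : (Tower M l).retractClosure X)
    (hM : (Tower G l').retractClosure M) :
    (Tower G (l.flatMap fun n => l'.map (· + n))).retractClosure X :=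
  let ⟨_, hY, ⟨r⟩⟩ := hX
  ObjectProperty.prop_of_retract _ r (hY.retractClosure_flatMap hC hM)

lemma isThick_exists_tower (hC : ExtAssoc C) (G : C) :
    IsThick C {X : C | ∃ l, (Tower G l).retractClosure X} where
  mem_of_iso := by
    rintro X Y e ⟨l, hX⟩
    exact ⟨l, ObjectProperty.prop_of_iso _ e hX⟩
  shift_mem := by
    rintro X n ⟨l, hX⟩
    exact ⟨_, Tower.retractClosure_shift hX n⟩
  cone_mem := by
    rintro T hT ⟨l₁, h₁⟩ ⟨l₂, h₂⟩
    exact ⟨_, Tower.retractClosure_extensionProduct_le hC G _ _ _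
      ⟨_, _, _, _, _, rot_of_distTriang _ hT, h₂, Tower.retractClosure_shift h₁ 1⟩⟩
  summand_mem := by
    rintro X Y ⟨l, hXY⟩
    exact ⟨l, ObjectProperty.prop_of_retract _ ⟨biprod.inl, biprod.fst, biprod.inl_fst⟩ hXY⟩

lemma IsSplitGenerator.exists_tower (hG : IsSplitGenerator C G) (hC : ExtAssoc C) (X : C) :
    ∃ l, (Tower G l).retractClosure X :=
  hG X _ ⟨isThick_exists_tower hC G, [0], ObjectProperty.le_retractClosure _ _ (tower_self G)⟩

end Towers

section Cost

/-- The weight `∑ exp (n * t)` of a tower with list of shifts `l`. -/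
noncomputable def cost (t : ℝ) (l : List ℤ) : ℝ≥0∞ :=
  (l.map fun n : ℤ => ENNReal.ofReal (Real.exp ((n : ℝ) * t))).sum

lemma cost_ne_top (t : ℝ) (l : List ℤ) : cost t l ≠ ⊤ := by
  induction l with
  | nil => simp [cost]
  | cons n l ih => simpa [cost] using ih

lemma cost_shift (t : ℝ) (k : ℤ) (l : List ℤ) :
    cost t (l.map (· + k)) = cost t l * ENNReal.ofReal (Real.exp ((k : ℝ) * t)) := by
  simp only [cost, List.map_map, ← List.sum_map_mul_right, Function.comp_def, Int.cast_add, add_mul,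
    Real.exp_add, ENNReal.ofReal_mul (Real.exp_nonneg _)]

lemma cost_flatMap (t : ℝ) (l l' : List ℤ) :
    cost t (l.flatMap fun n => l'.map (· + n)) = cost t l * cost t l' := by
  induction l with
  | nil => simp [cost]
  | cons n l ih =>
    have happend : ∀ l₁ l₂, cost t (l₁ ++ l₂) = cost t l₁ + cost t l₂ := by simp [cost]
    have hcons : cost t (n :: l) = ENNReal.ofReal (Real.exp (n * t)) + cost t l := by simp [cost]
    rw [List.flatMap_cons, happend, cost_shift, ih, hcons, add_mul, mul_comm]

lemma cost_reverse_ofFn (t : ℝ) {p : ℕ} (n : Fin p → ℤ) :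
    cost t (List.ofFn n).reverse = ∑ i, ENNReal.ofReal (Real.exp ((n i : ℝ) * t)) := by
  simp [cost, List.sum_reverse, List.sum_ofFn]

end Cost

lemma iter_add_obj {C : Type u} [Category.{v} C] (F : C ⥤ C) (m n : ℕ) (X : C) :
    (iter C F (m + n)).obj X = (iter C F m).obj ((iter C F n).obj X) := by
  induction m with
  | zero => rw [Nat.zero_add]; rfl
  | succ m ih => rw [Nat.succ_add]; exact congrArg F.obj ih

section Complexity

variable {C : Type u} [Category.{v} C] [Preadditive C] [HasZeroObject C]
  [HasShift C ℤ] [∀ n : ℤ, (shiftFunctor C n).Additive] [Pretriangulated C]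

/-- The infimum of the weights of the towers over `G` having `X` as a retract. It agrees with the
complexity `δ_t(G, X)` for `X` in the thick closure of `G`, by `complexity_eq_towerCost`. -/
noncomputable def towerCost (t : ℝ) (G X : C) : ℝ≥0∞ :=
  ⨅ l : {l : List ℤ // (Tower G l).retractClosure X}, cost t l

variable {G M X : C}

lemma towerCost_le (t : ℝ) {l : List ℤ} (h : (Tower G l).retractClosure X) :
    towerCost t G X ≤ cost t l :=
  iInf_le_of_le ⟨l, h⟩ le_rfl

lemma towerCost_ne_top (hC : ExtAssoc C) (hG : IsSplitGenerator C G) (t : ℝ) (X : C) :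
    towerCost t G X ≠ ⊤ :=
  let ⟨l, h⟩ := hG.exists_tower hC X
  ne_top_of_le_ne_top (cost_ne_top t l) (towerCost_le t h)

-- Neither factor may be the infimum of an empty family, since `0 * ⊤ = 0` in `ℝ≥0∞`.
lemma towerCost_le_mul (hC : ExtAssoc C) (t : ℝ) (hX : ∃ l, (Tower M l).retractClosure X)
    (hM : ∃ l, (Tower G l).retractClosure M) :
    towerCost t G X ≤ towerCost t M X * towerCost t G M := by
  obtain ⟨l, hl⟩ := hX
  obtain ⟨l', hl'⟩ := hM
  refine ENNReal.le_iInf_mul_iInf ⟨⟨l, hl⟩, cost_ne_top _ _⟩ ⟨⟨l', hl'⟩, cost_ne_top _ _⟩ ?_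
  rintro ⟨l, hl⟩ ⟨l', hl'⟩
  exact (towerCost_le t (Tower.retractClosure_trans hC hl hl')).trans (cost_flatMap t l l').le

section Iterates

variable (F : C ⥤ C) [F.CommShift ℤ] [F.IsTriangulated]

lemma Tower.retractClosure_iter {l : List ℤ} (h : (Tower M l).retractClosure X) (n : ℕ) :
    (Tower ((iter C F n).obj M) l).retractClosure ((iter C F n).obj X) := by
  induction n with
  | zero => exact h
  | succ n ih => exact Tower.retractClosure_map F ih

lemma towerCost_iter_le (t : ℝ) (M X : C) (n : ℕ) :
    towerCost t ((iter C F n).obj M) ((iter C F n).obj X) ≤ towerCost t M X :=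
  le_iInf fun ⟨_, h⟩ => towerCost_le t (Tower.retractClosure_iter F h n)

lemma towerCost_iter_le_mul (hC : ExtAssoc C) (hG : IsSplitGenerator C G)
    (hM : IsSplitGenerator C M) (t : ℝ) (X : C) (n : ℕ) :
    towerCost t G ((iter C F n).obj X) ≤ towerCost t M X * towerCost t G ((iter C F n).obj M) :=
  let ⟨l, hl⟩ := hM.exists_tower hC X
  (towerCost_le_mul hC t ⟨l, Tower.retractClosure_iter F hl n⟩ (hG.exists_tower hC _)).trans
    (mul_le_mul_left (towerCost_iter_le F t M X n) _)

end Iterates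

lemma exists_iso_biprod_of_retract {Y : C} (r : Retract X Y) : ∃ N : C, Nonempty (Y ≅ X ⊞ N) := by
  obtain ⟨N, g, h, hT⟩ := distinguished_cocone_triangle r.i
  obtain ⟨e, -⟩ := exists_iso_binaryBiproduct_of_distTriang _ hT
    (Triangle.mor₃_eq_zero_of_mono₁ _ hT (inferInstanceAs (Mono r.i)))
  exact ⟨N, ⟨e⟩⟩

lemma retractClosure_iff_exists_biprod (P : ObjectProperty C) (X : C) :
    P.retractClosure X ↔ ∃ Y N : C, P Y ∧ Nonempty (Y ≅ X ⊞ N) := by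
  constructor
  · rintro ⟨Y, hY, ⟨r⟩⟩
    obtain ⟨N, e⟩ := exists_iso_biprod_of_retract r
    exact ⟨Y, N, hY, e⟩
  · rintro ⟨Y, N, hY, ⟨e⟩⟩
    exact ⟨Y, hY, ⟨⟨biprod.inl ≫ e.inv, e.hom ≫ biprod.fst, by simp⟩⟩⟩

lemma tower_reverse_ofFn_iff {p : ℕ} (n : Fin p → ℤ) (X : C) :
    Tower M (List.ofFn n).reverse X ↔ ∃ A : Fin (p + 1) → C, IsZero (A 0) ∧ A (Fin.last p) = X ∧
      ∀ i : Fin p, ∃ (f : A i.castSucc ⟶ A i.succ) (g : A i.succ ⟶ M⟦n i⟧)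
        (h : M⟦n i⟧ ⟶ (A i.castSucc)⟦(1 : ℤ)⟧), Triangle.mk f g h ∈ distTriang C := by
  induction p generalizing X with
  | zero =>
    exact ⟨fun hX => ⟨fun _ => X, hX, rfl, nofun⟩, fun ⟨_, h0, hX, _⟩ => hX ▸ h0⟩
  | succ p ih =>
    rw [List.ofFn_succ', List.concat_eq_append, List.reverse_append]
    constructor
    · rintro ⟨B, _, f, g, h, hT, hB, ⟨⟩⟩
      obtain ⟨A, h0, rfl, hA⟩ := (ih _ _).1 hB
      refine ⟨Fin.snoc (α := fun _ => C) A X, ?_, Fin.snoc_last (α := fun _ => C) X A, ?_⟩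
      · rwa [Fin.snoc_apply_zero]
      · refine Fin.lastCases ?_ fun i => ?_
        · rw [Fin.succ_last, Fin.snoc_last, Fin.snoc_castSucc]
          exact ⟨f, g, h, hT⟩
        · rw [Fin.succ_castSucc, Fin.snoc_castSucc, Fin.snoc_castSucc]
          exact hA i
    · rintro ⟨A, h0, rfl, hA⟩
      obtain ⟨f, g, h, hT⟩ := hA (Fin.last p)
      exact ⟨_, _, f, g, h, hT, (ih _ _).2 ⟨fun i => A i.castSucc, h0, rfl,
        fun i => hA i.castSucc⟩, ⟨()⟩⟩

lemma complexity_eq_towerCost (hX : X ∈ thickClosure C G) (t : ℝ) :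
    complexity C t G X = towerCost t G X := by
  rw [complexity, if_pos hX]
  split_ifs with hzero
  · exact (le_antisymm (towerCost_le t (l := []) (ObjectProperty.le_retractClosure _ _ hzero))
      zero_le).symm
  · apply le_antisymm
    · refine le_iInf fun ⟨l, hl⟩ => ?_
      obtain ⟨Y, N, hY, ⟨e⟩⟩ := (retractClosure_iff_exists_biprod _ _).1 hl
      obtain ⟨p, n, rfl⟩ : ∃ (p : ℕ) (n : Fin p → ℤ), (List.ofFn n).reverse = l :=
        ⟨_, l.reverse.get, by rw [List.ofFn_get, List.reverse_reverse]⟩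
      obtain ⟨A, h0, rfl, hA⟩ := (tower_reverse_ofFn_iff n Y).1 hY
      have hp : p ≠ 0 := by
        rintro rfl
        exact hzero ((biprod_isZero_iff _ _).1 (h0.of_iso e.symm)).1
      exact sInf_le ⟨p, Nat.pos_of_ne_zero hp, n, A, N, h0, ⟨e⟩, hA, cost_reverse_ofFn t n⟩
    · refine le_sInf ?_
      rintro c ⟨p, -, n, A, N, h0, e, hA, rfl⟩
      rw [← cost_reverse_ofFn]
      exact towerCost_le t ((retractClosure_iff_exists_biprod _ _).2
        ⟨_, N, (tower_reverse_ofFn_iff n _).2 ⟨A, h0, rfl, hA⟩, e⟩)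

end Complexity

theorem statement_7_general {C : Type u} [Category.{v} C] [Preadditive C] [HasZeroObject C]
    [HasShift C ℤ] [∀ n : ℤ, (shiftFunctor C n).Additive] [Pretriangulated C] (hC : ExtAssoc C)
    (F : C ⥤ C) [F.CommShift ℤ] [F.IsTriangulated] (G G' : C) (hG : IsSplitGenerator C G)
    (hG' : IsSplitGenerator C G') (t : ℝ) :
    Tendsto (fun m : ℕ =>
        (((m : ℝ)⁻¹ : ℝ) : EReal) * (complexity C t G ((iter C F m).obj G')).log)
      atTop (nhds (entropy C F G t)) := by
  simp only [entropy, inv_natCast_mul_eq_div, complexity_eq_towerCost (hG _)]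
  refine tendsto_log_div_of_submultiplicative (fun n => towerCost_ne_top hC hG t _)
    (fun m n => ?_) (towerCost_ne_top hC hG t G') (towerCost_ne_top hC hG' t G)
    (fun n => towerCost_iter_le_mul F hC hG hG t G' n)
    (fun n => towerCost_iter_le_mul F hC hG hG' t G n)
  rw [iter_add_obj, mul_comm]
  exact towerCost_iter_le_mul F hC hG hG t _ m

/-- The entropy may be computed using any second split-generator `G'`:
the sequence `(1/n) log δ_(T,t)(G, Fⁿ G')` converges to `h_t(F)`. -/
theorem statement_7 {C : Type u} [Category.{v} C] [Preadditive C] [HasZeroObject C]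
    [HasShift C ℤ] [∀ n : ℤ, (shiftFunctor C n).Additive] [Pretriangulated C] [Linear ℂ C]
    (hC : ∃ X : C, ¬ IsZero X) (hft : IsFiniteType C)
    (F : C ⥤ C) [F.Additive] [F.Linear ℂ] [F.CommShift ℤ] [F.IsTriangulated]
    (G G' : C) (hG : IsSplitGenerator C G) (hG' : IsSplitGenerator C G')
    (hF : ∀ n : ℕ, ¬ IsZero ((iter C F n).obj G)) (t : ℝ) :
    Tendsto (fun m : ℕ =>
        (((m : ℝ)⁻¹ : ℝ) : EReal) * (complexity C t G ((iter C F m).obj G')).log)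
      atTop (nhds (entropy C F G t)) :=
  statement_7_general hft.extAssoc F G G' hG hG' t

end CatEntropy
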